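/- arXiv:2301.00700 — 9 statements merged into one kernel-verified Lean document; each statement's English description precedes it below -/
import Mathlib

section
/- Let R be a commutative semiring, M and N modules over R, and suppose the linear maps cup : R →ₗ[R] M ⊗[R] N and cap : N ⊗[R] M →ₗ[R] R satisfy the two zig-zag identities. Then M is a finitely generated R-module (Module.Finite R M). -/
open TensorProduct

/-!
The pairing `cap` curries to a map `N → M*`, which sends `cup 1 = ∑ mᵢ ⊗ nᵢ` to the element
`∑ cap (nᵢ ⊗ -) ⊗ mᵢ` of `M* ⊗ M`. The first zig-zag identity says that this element represents
`id_M`, i.e. that the `mᵢ` together with the functionals `cap (nᵢ ⊗ -)` form a finite dual basis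
of `M`.
-/

section Zigzag

variable {R M N P : Type*} [CommSemiring R] [AddCommMonoid M] [Module R M]
  [AddCommMonoid N] [Module R N] [AddCommMonoid P] [Module R P]

theorem dualTensorHom_rTensor_curry_comm (f : N ⊗[R] P →ₗ[R] R) (t : M ⊗[R] N) (p : P) :
    dualTensorHom R P M ((TensorProduct.curry f).rTensor M (TensorProduct.comm R M N t)) p =
      TensorProduct.rid R M (f.lTensor M (TensorProduct.assoc R M N P (t ⊗ₜ p))) := by
  induction t with
  | zero => simp
  | tmul m n => simp
  | add t₁ t₂ h₁ h₂ => simp only [map_add, LinearMap.add_apply, TensorProduct.add_tmul, h₁, h₂]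

theorem finite_of_zigzag_general (cup : R →ₗ[R] M ⊗[R] N) (cap : N ⊗[R] M →ₗ[R] R)
    (zig : ∀ m : M,
      TensorProduct.rid R M
        (cap.lTensor M
          (TensorProduct.assoc R M N M
            (cup.rTensor M ((TensorProduct.lid R M).symm m)))) = m) :
    Module.Finite R M ∧ Module.Projective R M :=
  have one_mem : 1 ∈ (dualTensorHom R M M).range :=
    ⟨(TensorProduct.curry cap).rTensor M (TensorProduct.comm R M N (cup 1)),
      LinearMap.ext fun m => (dualTensorHom_rTensor_curry_comm cap (cup 1) m).trans (zig m)⟩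
  ⟨.of_one_mem_range_dualTensorHom one_mem, .of_one_mem_range_dualTensorHom one_mem⟩

end Zigzag

/-- If `cup` and `cap` satisfy the two zig-zag identities, then `M` is a finitely
generated `R`-module. -/
theorem finite_of_zigzag {R : Type*} [CommSemiring R] {M N : Type*}
    [AddCommMonoid M] [Module R M] [AddCommMonoid N] [Module R N]
    (cup : R →ₗ[R] M ⊗[R] N) (cap : N ⊗[R] M →ₗ[R] R)
    (zig : ∀ m : M,
      (TensorProduct.rid R M)
        ((LinearMap.lTensor M cap)
          ((TensorProduct.assoc R M N M)
            ((LinearMap.rTensor M cup) ((TensorProduct.lid R M).symm m)))) = m)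
    (zag : ∀ n : N,
      (TensorProduct.lid R N)
        ((LinearMap.rTensor N cap)
          ((TensorProduct.assoc R N M N).symm
            ((LinearMap.lTensor N cup) ((TensorProduct.rid R N).symm n)))) = n) :
    Module.Finite R M :=
  (finite_of_zigzag_general cup cap zig).1
end

section
/- Let R be a commutative semiring, M and N modules over R, and suppose the linear maps cup : R →ₗ[R] M ⊗[R] N and cap : N ⊗[R] M →ₗ[R] R satisfy the two zig-zag identities. Then the linear map ψ : N →ₗ[R] Module.Dual R M defined by ψ(n)(m) = cap(n ⊗ m) is bijective; in particular N is isomorphic as an R-module to the dual module Module.Dual R M. -/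
open TensorProduct

/-!
Put `t = cup 1`. Contracting `t` against a functional on `M` gives a map `Module.Dual R M → N`.
Applied to `ψ n`, it computes the left side of the second zig-zag identity at `n`, hence returns
`n`. In the other direction, `ψ` of the contraction of `t` by `f`, evaluated at `m`, is the
contraction of `t` by `f` on `M` and by `cap (- ⊗ₜ m)` on `N`. The two contractions commute, and
doing the one on `N` first gives `f` of the left side of the first identity at `m`, that is `f m`.
-/

section AssocTensor

variable {R M N P Q : Type*} [CommSemiring R] [AddCommMonoid M] [Module R M]
  [AddCommMonoid N] [Module R N] [AddCommMonoid P] [Module R P] [AddCommMonoid Q] [Module R Q]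

theorem rTensor_assoc_symm_tmul (c : N ⊗[R] M →ₗ[R] P) (n : N) (t : M ⊗[R] Q) :
    c.rTensor Q ((TensorProduct.assoc R N M Q).symm (n ⊗ₜ t)) = (curry c n).rTensor Q t := by
  have h : c.rTensor Q ∘ₗ (TensorProduct.assoc R N M Q).symm ∘ₗ mk R N (M ⊗[R] Q) n =
      (curry c n).rTensor Q := by
    ext
    rfl
  exact LinearMap.congr_fun h t

theorem lTensor_assoc_tmul (c : N ⊗[R] M →ₗ[R] P) (t : Q ⊗[R] N) (m : M) :
    c.lTensor Q (TensorProduct.assoc R Q N M (t ⊗ₜ m)) = ((curry c).flip m).lTensor Q t := by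
  have h : c.lTensor Q ∘ₗ TensorProduct.assoc R Q N M ∘ₗ (mk R (Q ⊗[R] N) M).flip m =
      ((curry c).flip m).lTensor Q := by
    ext
    rfl
  exact LinearMap.congr_fun h t

end AssocTensor

section DualContraction

variable {R M N : Type*} [CommSemiring R] [AddCommMonoid M] [Module R M]
  [AddCommMonoid N] [Module R N]

/-- Contraction of a fixed tensor `t : M ⊗[R] N` with functionals on its first factor, that is
`f ↦ (f ⊗ id) t`. For `t = cup 1` it is the inverse of the map `N → Module.Dual R M` induced by
`cap`. -/
noncomputable def dualContraction (t : M ⊗[R] N) : Module.Dual R M →ₗ[R] N :=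
  TensorProduct.lid R N ∘ₗ (LinearMap.rTensorHom N).flip t

theorem dualContraction_apply (t : M ⊗[R] N) (f : Module.Dual R M) :
    dualContraction t f = TensorProduct.lid R N (f.rTensor N t) :=
  rfl

theorem apply_dualContraction (t : M ⊗[R] N) (f : Module.Dual R M) (g : Module.Dual R N) :
    g (dualContraction t f) = f (TensorProduct.rid R M (g.lTensor M t)) := by
  have h : g ∘ₗ TensorProduct.lid R N ∘ₗ f.rTensor N =
      f ∘ₗ TensorProduct.rid R M ∘ₗ g.lTensor M := by
    ext
    simp [mul_comm]
  exact LinearMap.congr_fun h t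

theorem leftInverse_dualContraction_curry {t : M ⊗[R] N} {c : N ⊗[R] M →ₗ[R] R}
    (zag : ∀ n : N, TensorProduct.lid R N
      (c.rTensor N ((TensorProduct.assoc R N M N).symm (n ⊗ₜ t))) = n) :
    Function.LeftInverse (dualContraction t) (curry c) := fun n ↦ by
  rw [dualContraction_apply, ← rTensor_assoc_symm_tmul, zag]

theorem rightInverse_dualContraction_curry {t : M ⊗[R] N} {c : N ⊗[R] M →ₗ[R] R}
    (zig : ∀ m : M, TensorProduct.rid R M
      (c.lTensor M (TensorProduct.assoc R M N M (t ⊗ₜ m))) = m) :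
    Function.RightInverse (dualContraction t) (curry c) := fun f ↦ by
  ext m
  calc curry c (dualContraction t f) m
      = f (TensorProduct.rid R M (((curry c).flip m).lTensor M t)) :=
        apply_dualContraction t f ((curry c).flip m)
    _ = f m := by rw [← lTensor_assoc_tmul, zig]

end DualContraction

/-- If `cup` and `cap` satisfy the two zig-zag identities, then the map
`ψ : N →ₗ[R] Module.Dual R M` given by `ψ n m = cap (n ⊗ₜ m)` is bijective;
in particular `N` is isomorphic to the dual module of `M`. -/
theorem bijective_psi_of_zigzag {R : Type*} [CommSemiring R] {M N : Type*}
    [AddCommMonoid M] [Module R M] [AddCommMonoid N] [Module R N]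
    (cup : R →ₗ[R] M ⊗[R] N) (cap : N ⊗[R] M →ₗ[R] R)
    (zig : ∀ m : M,
      (TensorProduct.rid R M)
        ((LinearMap.lTensor M cap)
          ((TensorProduct.assoc R M N M)
            ((LinearMap.rTensor M cup) ((TensorProduct.lid R M).symm m)))) = m)
    (zag : ∀ n : N,
      (TensorProduct.lid R N)
        ((LinearMap.rTensor N cap)
          ((TensorProduct.assoc R N M N).symm
            ((LinearMap.lTensor N cup) ((TensorProduct.rid R N).symm n)))) = n)
    (ψ : N →ₗ[R] Module.Dual R M)
    (hψ : ∀ (n : N) (m : M), ψ n m = cap (n ⊗ₜ[R] m)) :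
    Function.Bijective ψ := by
  obtain rfl : ψ = curry cap := LinearMap.ext₂ hψ
  simp only [TensorProduct.lid_symm_apply, LinearMap.rTensor_tmul] at zig
  simp only [TensorProduct.rid_symm_apply, LinearMap.lTensor_tmul] at zag
  exact Function.bijective_iff_has_inverse.mpr ⟨dualContraction (cup 1),
    leftInverse_dualContraction_curry zag, rightInverse_dualContraction_curry zig⟩
end

section
/- Let R be a commutative semiring and P a finitely generated projective R-module. Let cap : Module.Dual R P ⊗[R] P →ₗ[R] R be the canonical evaluation map sending f ⊗ m to f(m). Then there exists a linear map cup : R →ₗ[R] P ⊗[R] Module.Dual R P such that cup and cap satisfy the two zig-zag identities. -/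
open TensorProduct

/- By finite projectivity the identity of `P` is the image of a tensor `t` under the canonical map
`Dual R P ⊗ P → (P → P)`. For any tensor `t`, taking `cup 1 = t` (with its factors swapped) turns
the two zig-zag composites into the endomorphism represented by `t` and into its transpose. -/

section Copairing

variable {R M N : Type*} [CommSemiring R] [AddCommMonoid M] [AddCommMonoid N] [Module R M]
  [Module R N]

/-- The copairing `R → N ⊗ Dual R M` determined by a tensor `t`: the candidate for the `cup` of a
duality. The factors of `t` are ordered as in the domain of `dualTensorHom`, so that `t` also
represents a linear map `M → N`. -/
def copairing (t : Module.Dual R M ⊗[R] N) : R →ₗ[R] N ⊗[R] Module.Dual R M :=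
  LinearMap.toSpanSingleton R _ (TensorProduct.comm R _ _ t)

theorem copairing_apply_one (t : Module.Dual R M ⊗[R] N) :
    copairing t 1 = TensorProduct.comm R _ _ t :=
  LinearMap.toSpanSingleton_apply_one R _ _

theorem lTensor_contractLeft_copairing (t : Module.Dual R M ⊗[R] N) (m : M) :
    (TensorProduct.rid R N)
      ((LinearMap.lTensor N (contractLeft R M))
        ((TensorProduct.assoc R N (Module.Dual R M) M)
          ((LinearMap.rTensor M (copairing t)) ((TensorProduct.lid R M).symm m)))) =
      dualTensorHom R M N t m := by
  rw [TensorProduct.lid_symm_apply, LinearMap.rTensor_tmul, copairing_apply_one]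
  induction t with
  | zero => simp
  | tmul g n => simp
  | add t₁ t₂ h₁ h₂ => simp only [map_add, TensorProduct.add_tmul, LinearMap.add_apply, h₁, h₂]

theorem rTensor_contractLeft_copairing (t : Module.Dual R M ⊗[R] N) (f : Module.Dual R N) :
    (TensorProduct.lid R (Module.Dual R M))
      ((LinearMap.rTensor (Module.Dual R M) (contractLeft R N))
        ((TensorProduct.assoc R (Module.Dual R N) N (Module.Dual R M)).symm
          ((LinearMap.lTensor (Module.Dual R N) (copairing t))
            ((TensorProduct.rid R (Module.Dual R N)).symm f)))) =
      f ∘ₗ dualTensorHom R M N t := by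
  rw [TensorProduct.rid_symm_apply, LinearMap.lTensor_tmul, copairing_apply_one]
  induction t with
  | zero => simp
  | tmul g n =>
    ext m
    simp [mul_comm]
  | add t₁ t₂ h₁ h₂ => simp only [map_add, TensorProduct.tmul_add, LinearMap.comp_add, h₁, h₂]

end Copairing

/-- For a finitely generated projective module `P` over a commutative semiring `R`,
the canonical evaluation map `cap : Dual R P ⊗ P → R`, `f ⊗ m ↦ f m`, admits a
coevaluation map `cup : R → P ⊗ Dual R P` satisfying the two zig-zag identities. -/
theorem exists_coevaluation {R : Type*} [CommSemiring R] {P : Type*}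
    [AddCommMonoid P] [Module R P] [Module.Finite R P] [Module.Projective R P]
    (cap : Module.Dual R P ⊗[R] P →ₗ[R] R)
    (hcap : ∀ (f : Module.Dual R P) (m : P), cap (f ⊗ₜ[R] m) = f m) :
    ∃ cup : R →ₗ[R] P ⊗[R] Module.Dual R P,
      (∀ m : P,
        (TensorProduct.rid R P)
          ((LinearMap.lTensor P cap)
            ((TensorProduct.assoc R P (Module.Dual R P) P)
              ((LinearMap.rTensor P cup) ((TensorProduct.lid R P).symm m)))) = m) ∧
      (∀ f : Module.Dual R P,
        (TensorProduct.lid R (Module.Dual R P))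
          ((LinearMap.rTensor (Module.Dual R P) cap)
            ((TensorProduct.assoc R (Module.Dual R P) P (Module.Dual R P)).symm
              ((LinearMap.lTensor (Module.Dual R P) cup)
                ((TensorProduct.rid R (Module.Dual R P)).symm f)))) = f) := by
  obtain rfl : cap = contractLeft R P := TensorProduct.ext' hcap
  obtain ⟨t, ht⟩ : ∃ t, dualTensorHom R P P t = LinearMap.id :=
    dualTensorHom_bijective.surjective LinearMap.id
  refine ⟨copairing t, fun m => ?_, fun f => ?_⟩
  · rw [lTensor_contractLeft_copairing, ht, LinearMap.id_apply]
  · rw [rTensor_contractLeft_copairing, ht, LinearMap.comp_id]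
end

section
/- For every NFA M over an alphabet α with state type σ and all words u, v : List α, one has u ++ v ∈ traceLang M if and only if v ++ u ∈ traceLang M; that is, the trace language of an NFA is a circular language. -/
/-- The trace language of an NFA: the set of words read along some cycle. -/
def traceLang {α σ : Type*} (M : NFA α σ) : Language α :=
  {ω : List α | ∃ q : σ, q ∈ M.evalFrom {q} ω}

section

variable {α σ : Type*} {M : NFA α σ}

theorem mem_evalFrom_append_iff_exists {S : Set σ} {s : σ} {u v : List α} :
    s ∈ M.evalFrom S (u ++ v) ↔ ∃ t ∈ M.evalFrom S u, s ∈ M.evalFrom {t} v := by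
  rw [NFA.evalFrom_append, NFA.mem_evalFrom_iff_exists]

theorem append_mem_traceLang_iff_exists {u v : List α} :
    u ++ v ∈ traceLang M ↔ ∃ p q, q ∈ M.evalFrom {p} u ∧ p ∈ M.evalFrom {q} v :=
  exists_congr fun _ ↦ mem_evalFrom_append_iff_exists

end

/-- The trace language of an NFA is a circular language. -/
theorem traceLang_circular {α σ : Type*} (M : NFA α σ) (u v : List α) :
    u ++ v ∈ traceLang M ↔ v ++ u ∈ traceLang M := by
  calc u ++ v ∈ traceLang M
    _ ↔ ∃ p q, q ∈ M.evalFrom {p} u ∧ p ∈ M.evalFrom {q} v := append_mem_traceLang_iff_exists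
    _ ↔ ∃ q p, p ∈ M.evalFrom {q} v ∧ q ∈ M.evalFrom {p} u := by
      rw [exists_comm]
      simp only [and_comm]
    _ ↔ v ++ u ∈ traceLang M := append_mem_traceLang_iff_exists.symm
end

section
/- For every NFA M over an alphabet α whose state type σ is a Fintype, the trace language traceLang M is a regular language (it is accepted by some DFA with a finite state type). -/
section TransitionRelation

variable {α σ : Type*}

/-- The transition relation of a word `w` in `M`, encoded as the map sending a state `q` to the set
of states in which `M` can be after reading `w` from `q`. An automaton with finitely many states has
finitely many transition relations, and a DFA can keep track of them letter by letter. -/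
def transitionRel (M : NFA α σ) (w : List α) : σ → Set σ :=
  fun q => M.evalFrom {q} w

/-- The DFA that computes the transition relation of the word it reads, by running `M` from all
states in parallel, and accepts when this relation belongs to `P`. -/
def transitionDFA (M : NFA α σ) (P : Set (σ → Set σ)) : DFA α (σ → Set σ) where
  step R a := fun q => M.stepSet (R q) a
  start := fun q => {q}
  accept := P

theorem evalFrom_transitionDFA (M : NFA α σ) (P : Set (σ → Set σ)) (R : σ → Set σ) (w : List α) :
    (transitionDFA M P).evalFrom R w = fun q => M.evalFrom (R q) w := by
  induction w generalizing R with
  | nil => rfl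
  | cons _ _ ih => exact ih _

theorem eval_transitionDFA (M : NFA α σ) (P : Set (σ → Set σ)) (w : List α) :
    (transitionDFA M P).eval w = transitionRel M w :=
  evalFrom_transitionDFA M P _ w

theorem mem_accepts_transitionDFA {M : NFA α σ} {P : Set (σ → Set σ)} {w : List α} :
    w ∈ (transitionDFA M P).accepts ↔ transitionRel M w ∈ P := by
  rw [DFA.mem_accepts, eval_transitionDFA]
  rfl

theorem isRegular_setOf_transitionRel_mem [Finite σ] (M : NFA α σ) (P : Set (σ → Set σ)) :
    Language.IsRegular {w : List α | transitionRel M w ∈ P} :=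
  Language.isRegular_iff.2 ⟨σ → Set σ, Fintype.ofFinite _, transitionDFA M P,
    Language.ext fun _ => mem_accepts_transitionDFA⟩

theorem traceLang_isRegular_general [Finite σ] (M : NFA α σ) :
    Language.IsRegular (traceLang M) :=
  isRegular_setOf_transitionRel_mem M {R | ∃ q, q ∈ R q}

end TransitionRelation

/-- The trace language of an NFA with finitely many states is regular. -/
theorem traceLang_isRegular {α : Type} {σ : Type*} [Fintype σ] (M : NFA α σ) :
    Language.IsRegular (traceLang M) :=
  traceLang_isRegular_general M
end

section
/- Let M be an NFA over α with state type σ, where σ is a Fintype with Fintype.card σ = k, and let a : α. If there exist states q, q' : σ with q' ∈ M.evalFrom {q} (List.replicate k a), then there exists m : ℕ with 1 ≤ m, m ≤ k, and List.replicate m a ∈ traceLang M; that is, a path reading a^k forces a cycle reading a^m for some 1 ≤ m ≤ k. -/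
/-!
Go through a path from its end to its start, counting the distinct states visited so far. As long
as every new state is fresh, the count exceeds the length of the word read; the first repeated state
closes a cycle, whose length is at most the count. A path over an automaton with `k` states that
reads `k` letters must therefore repeat a state, and every factor of `a^k` is a power of `a`.
-/

section Path

variable {α σ : Type*} [DecidableEq σ] {M : NFA α σ} {s t u : σ} {x : List α}

theorem exists_prefix_nonempty_path_of_mem_supp (p : M.Path s t x) (hu : u ∈ p.supp) :
    ∃ y, y <+: x ∧ Nonempty (M.Path s u y) := by
  induction p with
  | nil s =>
    obtain rfl : u = s := by simpa using hu
    exact ⟨[], List.nil_prefix, ⟨.nil u⟩⟩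
  | cons r s t a x hr p ih =>
    obtain rfl | hu : u = s ∨ u ∈ p.supp := by simpa using hu
    · exact ⟨[], List.nil_prefix, ⟨.nil u⟩⟩
    · obtain ⟨y, hyx, ⟨c⟩⟩ := ih hu
      exact ⟨a :: y, List.cons_prefix_cons.mpr ⟨rfl, hyx⟩, ⟨.cons r s u a y hr c⟩⟩

theorem exists_infix_mem_traceLang_of_card_supp_le (p : M.Path s t x)
    (hp : p.supp.card ≤ x.length) :
    ∃ y, y <:+: x ∧ y ≠ [] ∧ y.length ≤ p.supp.card ∧ y ∈ traceLang M := by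
  induction p with
  | nil s => simp at hp
  | cons r s t a x hr p ih =>
    have hsupp : p.supp.card ≤ (NFA.Path.cons r s t a x hr p).supp.card :=
      Finset.card_le_card Finset.subset_union_right
    by_cases htail : p.supp.card ≤ x.length
    · obtain ⟨y, hyx, hy, hcard, hcycle⟩ := ih htail
      exact ⟨y, hyx.trans (List.suffix_cons a x).isInfix, hy, hcard.trans hsupp, hcycle⟩
    · have hs : s ∈ p.supp := by
        by_contra hs
        have hcard : (NFA.Path.cons r s t a x hr p).supp.card = p.supp.card + 1 :=
          Finset.card_insert_of_notMem hs
        rw [hcard, List.length_cons] at hp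
        lia
      obtain ⟨y, hyx, ⟨c⟩⟩ := exists_prefix_nonempty_path_of_mem_supp p hs
      refine ⟨a :: y, (List.cons_prefix_cons.mpr ⟨rfl, hyx⟩).isInfix, List.cons_ne_nil a y, ?_,
        s, NFA.mem_evalFrom_iff_nonempty_path.mpr ⟨.cons r s s a y hr c⟩⟩
      calc (a :: y).length ≤ x.length + 1 := Nat.succ_le_succ hyx.length_le
        _ ≤ p.supp.card := Nat.lt_of_not_le htail
        _ ≤ _ := hsupp

theorem replicate_mem_traceLang_of_path_general {n : ℕ} {a : α}
    (p : M.Path s t (List.replicate n a)) (hp : p.supp.card ≤ n) :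
    ∃ m : ℕ, 1 ≤ m ∧ m ≤ p.supp.card ∧ List.replicate m a ∈ traceLang M := by
  obtain ⟨y, hy, hne, hcard, hcycle⟩ :=
    exists_infix_mem_traceLang_of_card_supp_le p (by rwa [List.length_replicate])
  have hrep : y = List.replicate y.length a := (List.infix_replicate_iff.mp hy).2
  exact ⟨y.length, List.length_pos_of_ne_nil hne, hcard, hrep ▸ hcycle⟩

end Path

/-- A path reading `a^k` in an automaton with `k` states forces a cycle reading
`a^m` for some `1 ≤ m ≤ k`. -/
theorem replicate_mem_traceLang_of_path {α σ : Type*} [Fintype σ]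
    (M : NFA α σ) (k : ℕ) (hk : Fintype.card σ = k) (a : α) (q q' : σ)
    (h : q' ∈ M.evalFrom {q} (List.replicate k a)) :
    ∃ m : ℕ, 1 ≤ m ∧ m ≤ k ∧ List.replicate m a ∈ traceLang M := by
  classical
  obtain ⟨p⟩ := NFA.mem_evalFrom_iff_nonempty_path.mp h
  have hp : p.supp.card ≤ k := hk ▸ p.supp.card_le_univ
  obtain ⟨m, hm, hmp, hcycle⟩ := replicate_mem_traceLang_of_path_general p hp
  exact ⟨m, hm, hmp.trans hp, hcycle⟩
end

section
/- For every nonempty finite distributive lattice α there exist a finite topological space X and an order isomorphism between α and the lattice Opens X of open subsets of X (ordered by inclusion, with join given by union and meet by intersection). -/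
/-!
By Birkhoff's representation theorem, a nonempty finite distributive lattice is the lattice of
lower sets of its poset of sup-irreducible elements, and the lower sets of a poset are the open
sets of its Alexandrov topology.
-/

/-- The order isomorphism identifying the lower sets of a preorder with the open sets of its
lower set (Alexandrov) topology. -/
def lowerSetOrderIsoOpens (P : Type*) [Preorder P] [TopologicalSpace P] [Topology.IsLowerSet P] :
    LowerSet P ≃o TopologicalSpace.Opens P where
  toFun s := ⟨s, Topology.IsLowerSet.isOpen_iff_isLowerSet.mpr s.lower⟩
  invFun u := ⟨u, Topology.IsLowerSet.isOpen_iff_isLowerSet.mp u.isOpen⟩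
  map_rel_iff' := Iff.rfl

/-- Every nonempty finite distributive lattice is order-isomorphic to the
lattice of open sets of a finite topological space. -/
theorem finite_distribLattice_iso_opens (α : Type*)
    [DistribLattice α] [Fintype α] [Nonempty α] :
    ∃ (X : Type) (tX : TopologicalSpace X) (_ : Fintype X),
      Nonempty (α ≃o @TopologicalSpace.Opens X tX) := by
  classical
  let : OrderBot α := Fintype.toOrderBot α
  let P := {a : α // SupIrred a}
  let : TopologicalSpace P := Topology.lowerSet P
  let birkhoff : α ≃o LowerSet P := OrderIso.lowerSetSupIrred
  let toShrink : P ≃ₜ Shrink.{0} P := Shrink.homeomorph.{0} P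
  exact ⟨Shrink P, inferInstance, inferInstance,
    ⟨birkhoff.trans <| (lowerSetOrderIsoOpens P).trans toShrink.opensCongr⟩⟩
end

section
/- Let X be a finite topological space. An open set U : Opens X is sup-irreducible (SupIrred: U is not the bottom element and whenever U = V ⊔ W one has U = V or U = W) if and only if there exists x : X with U = U_x, the minimal open neighborhood of x. -/
open TopologicalSpace

/-- The minimal open neighborhood of a point in a finite topological space:
the intersection of all open sets containing it. -/
def minOpen {X : Type*} [TopologicalSpace X] [Fintype X] (x : X) : Opens X :=
  ⟨⋂₀ {U : Set X | IsOpen U ∧ x ∈ U},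
    (Set.toFinite _).isOpen_sInter fun _ hU => hU.1⟩

/-!
An open set of the form `nhdsKer {x}` lies below an open set `V` exactly when `x ∈ V`, so it is
sup-prime. Conversely, the open sets properly contained in a sup-irreducible open set `U` form a
directed family, so they cannot cover `U` when `U` is compact. A point of `U` outside their union
has no open neighborhood properly contained in `U`, and therefore has kernel `U`.
-/

theorem coe_minOpen {X : Type*} [TopologicalSpace X] [Fintype X] (x : X) :
    (minOpen x : Set X) = nhdsKer {x} := by
  simp only [minOpen, Opens.coe_mk, nhdsKer_def, Set.singleton_subset_iff]

theorem directedOn_Iio_of_supIrred {α : Type*} [SemilatticeSup α] {a : α} (ha : SupIrred a) :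
    DirectedOn (· ≤ ·) (Set.Iio a) := by
  intro b hb c hc
  have hne : b ⊔ c ≠ a := fun h => (ha.2 h).elim hb.ne hc.ne
  have hlt : b ⊔ c < a := (sup_le hb.le hc.le).lt_of_ne hne
  exact ⟨b ⊔ c, hlt, le_sup_left, le_sup_right⟩

theorem sSup_Iio_lt_of_supIrred {α : Type*} [CompleteLattice α] {a : α}
    (ha : SupIrred a) (hc : IsCompactElement a) : sSup (Set.Iio a) < a :=
  CompleteLattice.IsCompactElement.directed_sSup_lt_of_lt hc (not_isMin_iff.1 ha.not_isMin)
    (directedOn_Iio_of_supIrred ha) fun _ hb => hb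

section

variable {X : Type*} [TopologicalSpace X] {U : Opens X}

theorem le_iff_mem_of_coe_eq_nhdsKer {x : X} (hU : (U : Set X) = nhdsKer {x}) {V : Opens X} :
    U ≤ V ↔ x ∈ V := by
  rw [← SetLike.coe_subset_coe, hU, V.isOpen.nhdsKer_subset, Set.singleton_subset_iff,
    SetLike.mem_coe]

theorem supPrime_of_coe_eq_nhdsKer {x : X} (hU : (U : Set X) = nhdsKer {x}) : SupPrime U := by
  have le_iff_mem {V : Opens X} : U ≤ V ↔ x ∈ V := le_iff_mem_of_coe_eq_nhdsKer hU
  refine ⟨fun hmin => ?_, fun V W hVW => ?_⟩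
  · exact le_iff_mem.1 hmin.eq_bot.le
  · exact (le_iff_mem.1 hVW).imp le_iff_mem.2 le_iff_mem.2

theorem exists_coe_eq_nhdsKer_of_supIrred (hU : SupIrred U) (hc : IsCompact (U : Set X)) :
    ∃ x : X, (U : Set X) = nhdsKer {x} := by
  have hlt : sSup (Set.Iio U) < U :=
    sSup_Iio_lt_of_supIrred hU ((Opens.isCompactElement_iff U).2 hc)
  obtain ⟨x, hxU, hx⟩ := SetLike.exists_of_lt hlt
  have le_of_mem (V : Opens X) (hxV : x ∈ V) : U ≤ V := by
    by_contra hUV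
    exact hx (Opens.mem_sSup.2 ⟨U ⊓ V, inf_lt_left.2 hUV, hxU, hxV⟩)
  refine ⟨x, Set.Subset.antisymm ?_ ?_⟩
  · exact subset_nhdsKer_iff.2 fun V hV hxV => le_of_mem ⟨V, hV⟩ (Set.singleton_subset_iff.1 hxV)
  · exact nhdsKer_minimal (Set.singleton_subset_iff.2 hxU) U.isOpen

theorem supIrred_iff_minOpen_general (hc : IsCompact (U : Set X)) :
    SupIrred U ↔ ∃ x : X, (U : Set X) = nhdsKer {x} :=
  ⟨fun hU => exists_coe_eq_nhdsKer_of_supIrred hU hc,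
    fun ⟨_, hx⟩ => (supPrime_of_coe_eq_nhdsKer hx).supIrred⟩

end

/-- In a finite topological space, an open set is sup-irreducible in the
lattice of opens if and only if it is the minimal open neighborhood of some
point. -/
theorem supIrred_iff_minOpen {X : Type*} [TopologicalSpace X] [Fintype X]
    (U : Opens X) :
    SupIrred U ↔ ∃ x : X, U = minOpen x := by
  simpa only [SetLike.ext'_iff, coe_minOpen] using
    supIrred_iff_minOpen_general (Set.toFinite (U : Set X)).isCompact
end

section
/- Let X be a finite topological space, X_in an open subset of X, X_t a closed subset of X, and for each letter a : α let m a : Opens X → Opens X preserve finite unions (m a (U ⊔ V) = m a U ⊔ m a V and m a ⊥ = ⊥). For a word ω = [a₁, …, aₙ] let m_ω := m a₁ ∘ ⋯ ∘ m aₙ (the identity for the empty word). Then both the interval language L_I := {ω : List α | X_t ∩ (m_ω X_in : Set X) ≠ ∅} and the trace language L∘ := {ω : List α | ∃ x : X, x ∈ m_ω (U_x)} are regular languages (each is accepted by some DFA with a finite state type). -/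
open TopologicalSpace

/-- For a word `ω = [a₁, …, aₙ]`, the composite `m a₁ ∘ ⋯ ∘ m aₙ`
(the identity for the empty word). -/
def mWord {α X : Type*} [TopologicalSpace X]
    (m : α → Opens X → Opens X) : List α → Opens X → Opens X :=
  fun ω => ω.foldr (fun a g => m a ∘ g) id

/-!
Right multiplication turns a finite monoid into the state set of a deterministic automaton, so a
language that only depends on the value of a word in a finite monoid is regular. Since `X` is
finite, so is the monoid of self-maps of `Opens X`; the value of `ω` in it is `m_ω`, and both the
interval and the trace condition depend on `ω` only through `m_ω`.
-/

section CayleyDFA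

variable {α M : Type*} [Monoid M]

/-- The Cayley automaton of a letter valuation `φ` in a monoid: reading `a` multiplies the state on
the right by `φ a`, starting from `1`; the states in `S` accept. -/
def cayleyDFA (φ : α → M) (S : Set M) : DFA α M where
  step g a := g * φ a
  start := 1
  accept := S

theorem cayleyDFA_eval (φ : α → M) (S : Set M) (ω : List α) :
    (cayleyDFA φ S).eval ω = (ω.map φ).prod := by
  rw [List.prod_eq_foldl, List.foldl_map]
  rfl

theorem isRegular_of_mem_iff_prod_map_mem [Finite M] {L : Language α} (φ : α → M) (S : Set M)
    (mem_L_iff : ∀ ω, ω ∈ L ↔ (ω.map φ).prod ∈ S) : L.IsRegular := by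
  refine Language.isRegular_iff.mpr ⟨M, Fintype.ofFinite M, cayleyDFA φ S, ?_⟩
  ext ω
  rw [DFA.mem_accepts, cayleyDFA_eval, mem_L_iff]
  rfl

end CayleyDFA

section TAutomaton

variable {α X : Type*} [TopologicalSpace X]

theorem mWord_eq_prod_map (m : α → Function.End (Opens X)) (ω : List α) :
    mWord m ω = (ω.map m).prod := by
  rw [List.prod_eq_foldr, List.foldr_map]
  rfl

theorem isRegular_setOf_mWord_mem [Finite (Opens X)] (m : α → Function.End (Opens X))
    (S : Set (Function.End (Opens X))) :
    Language.IsRegular ({ω : List α | mWord m ω ∈ S} : Language α) := by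
  have : Finite (Function.End (Opens X)) := inferInstanceAs (Finite (Opens X → Opens X))
  refine isRegular_of_mem_iff_prod_map_mem m S fun ω => ?_
  rw [← mWord_eq_prod_map]
  rfl

theorem tAutomaton_languages_isRegular_general [Fintype X] (m : α → Opens X → Opens X)
    (Xin : Opens X) (Xt : Set X) :
    Language.IsRegular
      ({ω : List α | Xt ∩ (mWord m ω Xin : Set X) ≠ ∅} : Language α) ∧
    Language.IsRegular
      ({ω : List α | ∃ x : X, x ∈ mWord m ω (minOpen x)} : Language α) :=
  ⟨isRegular_setOf_mWord_mem m {g | Xt ∩ (g Xin : Set X) ≠ ∅},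
    isRegular_setOf_mWord_mem m {g | ∃ x : X, x ∈ g (minOpen x)}⟩

end TAutomaton

/-- The interval language and the trace language of a 𝒯-automaton (a finite
topological space with an initial open set, an accepting closed set and
union-preserving actions of the letters) are regular languages. -/
theorem tAutomaton_languages_isRegular {α : Type} {X : Type*}
    [TopologicalSpace X] [Fintype X]
    (m : α → Opens X → Opens X)
    (hm : ∀ (a : α) (U V : Opens X), m a (U ⊔ V) = m a U ⊔ m a V)
    (hm0 : ∀ a : α, m a ⊥ = ⊥)
    (Xin : Opens X) (Xt : Set X) (hXt : IsClosed Xt) :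
    Language.IsRegular
      ({ω : List α | Xt ∩ (mWord m ω Xin : Set X) ≠ ∅} : Language α) ∧
    Language.IsRegular
      ({ω : List α | ∃ x : X, x ∈ mWord m ω (minOpen x)} : Language α) :=
  tAutomaton_languages_isRegular_general m Xin Xt
end
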